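/- Tightness of Schnorr's bound: for every n ≥ 1 there exists a DeMorgan circuit with exactly 3(n − 1) binary gates computing XOR_n; hence CC(XOR_n) = 3(n − 1). -/

import Mathlib

/-- A node (gate) of a DeMorgan circuit on `n` inputs: an input variable, a constant,
a negation of an earlier node, or a binary ∧/∨ of two earlier (ordered) nodes.
Nodes are referenced by their position in the gate list. -/
inductive Gate (n : ℕ) : Type
  | inp : Fin n → Gate n
  | const : Bool → Gate n
  | not : ℕ → Gate n
  | and : ℕ → ℕ → Gate n
  | or : ℕ → ℕ → Gate n
deriving DecidableEq

/-- The (indices of the) nodes a gate reads from. -/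
def Gate.refs {n : ℕ} : Gate n → List ℕ
  | .inp _ => []
  | .const _ => []
  | .not a => [a]
  | .and a b => [a, b]
  | .or a b => [a, b]

/-- A DeMorgan circuit on `n` inputs: a finite DAG of gates, presented as a list in
topological order (every gate only reads strictly earlier gates), with a designated
output node. -/
structure Circuit (n : ℕ) : Type where
  gates : List (Gate n)
  output : Fin gates.length
  wf : ∀ (i : ℕ) (g : Gate n), gates[i]? = some g → ∀ r ∈ g.refs, r < i

/-- Value of a single gate, given the values `acc` of all earlier gates. -/
def Gate.val {n : ℕ} (x : Fin n → Bool) (acc : List Bool) : Gate n → Bool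
  | .inp i => x i
  | .const b => b
  | .not a => !(acc.getD a false)
  | .and a b => acc.getD a false && acc.getD b false
  | .or a b => acc.getD a false || acc.getD b false

/-- The list of values of all gates of the circuit, in topological order. -/
def Circuit.evalList {n : ℕ} (C : Circuit n) (x : Fin n → Bool) : List Bool :=
  C.gates.foldl (fun acc g => acc ++ [g.val x acc]) []

/-- The Boolean value computed by the circuit: the value of its output node. -/
def Circuit.eval {n : ℕ} (C : Circuit n) (x : Fin n → Bool) : Bool :=
  (C.evalList x).getD C.output false

/-- A gate is costly when it is a binary (∧/∨) gate; ¬ gates and constants are free. -/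
def Gate.costly {n : ℕ} : Gate n → Bool
  | .and _ _ => true
  | .or _ _ => true
  | _ => false

/-- The size of a circuit: its number of binary (∧/∨) gates. -/
def Circuit.size {n : ℕ} (C : Circuit n) : ℕ := (C.gates.filter Gate.costly).length

/-- `C` computes the Boolean function `f`. -/
def Circuit.Computes {n : ℕ} (C : Circuit n) (f : (Fin n → Bool) → Bool) : Prop :=
  ∀ x, C.eval x = f x

/-- The DeMorgan circuit complexity of `f`: the minimum number of binary gates of a
DeMorgan circuit computing `f`. -/
noncomputable def CC (n : ℕ) (f : (Fin n → Bool) → Bool) : ℕ :=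
  sInf {s | ∃ C : Circuit n, C.Computes f ∧ C.size = s}

/-- The parity function `XOR_n(x) = (x_1 + ⋯ + x_n) mod 2`. -/
def XORf (n : ℕ) (x : Fin n → Bool) : Bool :=
  decide ((∑ i : Fin n, (if x i then 1 else 0)) % 2 = 1)

namespace SchnorrProof

/-- Parity of the coordinates in `S`. -/
def par {n : ℕ} (S : Finset (Fin n)) (x : Fin n → Bool) : Bool :=
  decide ((∑ i ∈ S, (if x i then 1 else 0)) % 2 = 1)

theorem par_mem {n : ℕ} (S : Finset (Fin n)) (i : Fin n) (hi : i ∈ S) (x : Fin n → Bool) :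
    par S x = (x i ^^ par (S.erase i) x) := by
  unfold par
  rw [← Finset.add_sum_erase S _ hi]
  generalize (∑ i ∈ S.erase i, (if x i then 1 else 0)) = t
  cases x i
  · simp
  · simp only [if_true, Bool.true_xor]
    rw [← decide_not, decide_eq_decide]
    omega

theorem par_update {n : ℕ} (S : Finset (Fin n)) (i : Fin n) (hi : i ∉ S) (x : Fin n → Bool)
    (c : Bool) : par S (Function.update x i c) = par S x := by
  unfold par
  have : (∑ j ∈ S, (if Function.update x i c j then 1 else 0))
      = (∑ j ∈ S, (if x j then 1 else 0)) := by
    apply Finset.sum_congr rfl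
    intro j hj
    have : j ≠ i := by rintro rfl; exact hi hj
    simp [Function.update_of_ne this]
  rw [this]

theorem par_restrict {n : ℕ} (S : Finset (Fin n)) (i : Fin n) (hi : i ∈ S) (x : Fin n → Bool)
    (c : Bool) : par S (Function.update x i c) = (c ^^ par (S.erase i) x) := by
  rw [par_mem S i hi, par_update _ _ (by simp)]
  simp

theorem par_flip {n : ℕ} (S : Finset (Fin n)) (i : Fin n) (hi : i ∈ S) (x : Fin n → Bool) :
    par S (Function.update x i (!x i)) = !(par S x) := by
  rw [par_restrict S i hi, par_mem S i hi]
  simp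

/-- `f` is, up to negation, a constant, a variable of `S`, or a gate of `G` before `m`. -/
def Avail {n : ℕ} (S : Finset (Fin n)) (G : Finset ℕ) (φ : ℕ → (Fin n → Bool) → Bool) (m : ℕ)
    (f : (Fin n → Bool) → Bool) : Prop :=
  (∃ c : Bool, ∀ x, f x = c) ∨ (∃ i ∈ S, ∃ e : Bool, ∀ x, f x = (x i ^^ e)) ∨
    (∃ j ∈ G, j < m ∧ ∃ e : Bool, ∀ x, f x = (φ j x ^^ e))

/-- Every gate of `G` is the conjunction of two available functions. -/
def Valid {n : ℕ} (S : Finset (Fin n)) (G : Finset ℕ) (φ : ℕ → (Fin n → Bool) → Bool) : Prop :=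
  ∀ k ∈ G, ∃ a b, Avail S G φ k a ∧ Avail S G φ k b ∧ ∀ x, φ k x = (a x && b x)

section
variable {n : ℕ} {S : Finset (Fin n)} {G : Finset ℕ} {φ : ℕ → (Fin n → Bool) → Bool}

theorem Avail.xor {m : ℕ} {f : (Fin n → Bool) → Bool} (h : Avail S G φ m f) (e : Bool)
    {f' : (Fin n → Bool) → Bool} (hf : ∀ x, f' x = (f x ^^ e)) : Avail S G φ m f' := by
  rcases h with ⟨c, h⟩ | ⟨i, hi, e', h⟩ | ⟨j, hj, hjm, e', h⟩
  · exact Or.inl ⟨c ^^ e, fun x => by rw [hf, h]⟩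
  · exact Or.inr (Or.inl ⟨i, hi, e' ^^ e, fun x => by rw [hf, h, Bool.xor_assoc]⟩)
  · exact Or.inr (Or.inr ⟨j, hj, hjm, e' ^^ e, fun x => by rw [hf, h, Bool.xor_assoc]⟩)

theorem Avail.congr {m : ℕ} {f : (Fin n → Bool) → Bool} (h : Avail S G φ m f)
    {f' : (Fin n → Bool) → Bool} (hf : ∀ x, f' x = f x) : Avail S G φ m f' :=
  h.xor false (by simpa using hf)

theorem Avail.mono {m m' : ℕ} {f : (Fin n → Bool) → Bool} (h : Avail S G φ m f)
    (hm : m ≤ m') : Avail S G φ m' f := by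
  rcases h with h | h | ⟨j, hj, hjm, h⟩
  · exact Or.inl h
  · exact Or.inr (Or.inl h)
  · exact Or.inr (Or.inr ⟨j, hj, by omega, h⟩)

theorem Avail.erase {k m : ℕ} (hk : Avail S G φ k (φ k)) {f : (Fin n → Bool) → Bool}
    (h : Avail S G φ m f) : Avail S (G.erase k) φ m f := by
  have hk' : Avail S (G.erase k) φ k (φ k) := by
    rcases hk with h | h | ⟨j, hj, hjm, h⟩
    · exact Or.inl h
    · exact Or.inr (Or.inl h)
    · exact Or.inr (Or.inr ⟨j, by simp [hj]; omega, hjm, h⟩)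
  rcases h with h | h | ⟨j, hj, hjm, e, h⟩
  · exact Or.inl h
  · exact Or.inr (Or.inl h)
  · by_cases hjk : j = k
    · subst hjk
      exact (hk'.mono hjm.le).xor e h
    · exact Or.inr (Or.inr ⟨j, by simp [hj, hjk], hjm, e, h⟩)

theorem Valid.erase {k : ℕ} (hk : Avail S G φ k (φ k)) (h : Valid S G φ) :
    Valid S (G.erase k) φ := by
  intro l hl
  obtain ⟨a, b, ha, hb, hab⟩ := h l (Finset.mem_of_mem_erase hl)
  exact ⟨a, b, Avail.erase hk ha, Avail.erase hk hb, hab⟩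

theorem Avail.restrict {m : ℕ} {f : (Fin n → Bool) → Bool} (h : Avail S G φ m f) (i : Fin n)
    (c : Bool) : Avail (S.erase i) G (fun k x => φ k (Function.update x i c)) m
      (fun x => f (Function.update x i c)) := by
  rcases h with ⟨c', h⟩ | ⟨j, hj, e', h⟩ | ⟨j, hj, hjm, e', h⟩
  · exact Or.inl ⟨c', fun x => by simp only [h]⟩
  · by_cases hji : j = i
    · subst hji
      exact Or.inl ⟨c ^^ e', fun x => by simp [h]⟩
    · exact Or.inr (Or.inl ⟨j, by simp [hj, hji], e', fun x => by simp [h, hji]⟩)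
  · exact Or.inr (Or.inr ⟨j, hj, hjm, e', fun x => by simp only [h]⟩)

theorem Valid.restrict (h : Valid S G φ) (i : Fin n) (c : Bool) :
    Valid (S.erase i) G (fun k x => φ k (Function.update x i c)) := by
  intro k hk
  obtain ⟨a, b, ha, hb, hab⟩ := h k hk
  exact ⟨_, _, ha.restrict i c, hb.restrict i c, fun x => hab _⟩

/-- A conjunction with one constant side is available. -/
theorem Avail.and_const {m : ℕ} {a b f : (Fin n → Bool) → Bool} (hb : Avail S G φ m b)
    (c : Bool) (ha : ∀ x, a x = c) (hf : ∀ x, f x = (a x && b x)) : Avail S G φ m f := by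
  cases c
  · exact Or.inl ⟨false, fun x => by simp [hf, ha]⟩
  · exact hb.congr fun x => by simp [hf, ha]

end

/-- Parity of at least two variables is neither a constant nor a literal. -/
theorem par_is_gate {n : ℕ} {S : Finset (Fin n)} {G : Finset ℕ}
    {φ : ℕ → (Fin n → Bool) → Bool} (hS : 2 ≤ S.card) {m : ℕ} {t : Bool}
    (h : Avail S G φ m (fun x => par S x ^^ t)) :
    ∃ j ∈ G, j < m ∧ ∃ e : Bool, ∀ x, (par S x ^^ t) = (φ j x ^^ e) := by
  rcases h with ⟨c, h⟩ | ⟨j, hj, e', h⟩ | h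
  · exfalso
    obtain ⟨i, hi⟩ : S.Nonempty := Finset.card_pos.mp (by omega)
    have h1 := h (fun _ => false)
    have h2 := h (Function.update (fun _ => false) i (!false))
    have h3 := par_flip S i hi (fun _ => false)
    simp only at h1 h2 h3
    rw [h3, ← h1] at h2
    revert h2
    cases par S (fun _ => false) <;> cases t <;> simp
  · exfalso
    obtain ⟨i, hi, hij⟩ := Finset.exists_mem_ne (by omega : 1 < S.card) j
    have h1 := h (fun _ => false)
    have h2 := h (Function.update (fun _ => false) i (!false))
    have h3 := par_flip S i hi (fun _ => false)
    simp only at h1 h2 h3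
    rw [Function.update_of_ne (Ne.symm hij), h3, ← h1] at h2
    revert h2
    cases par S (fun _ => false) <;> cases t <;> simp
  · exact h

/-- A literal of `i`. -/
def IsLit {n : ℕ} (i : Fin n) (f : (Fin n → Bool) → Bool) : Prop :=
  ∃ e : Bool, ∀ x, f x = (x i ^^ e)

theorem exists_second_reader {n : ℕ} {S : Finset (Fin n)} {G : Finset ℕ}
    {φ : ℕ → (Fin n → Bool) → Bool} (hS : 2 ≤ S.card) {m : ℕ} {t : Bool}
    (h : Avail S G φ m (fun x => par S x ^^ t)) (g : ℕ) (i j : Fin n) (hi : i ∈ S)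
    (hij : i ≠ j) (a : (Fin n → Bool) → Bool)
    (e : Bool) (hg : ∀ x, φ g x = (a x && (x j ^^ e)))
    (H : ∀ k ∈ G, k ≠ g → ∃ a b, Avail S G φ k a ∧ Avail S G φ k b ∧
      (∀ x, φ k x = (a x && b x)) ∧ ¬ IsLit i a ∧ ¬ IsLit i b) : False := by
  have key : ∀ k, k ∈ G → ∀ x : Fin n → Bool, x j = e →
      φ k (Function.update x i (!x i)) = φ k x := by
    intro k
    induction k using Nat.strong_induction_on with
    | _ k ih =>
    intro hk x hx
    by_cases hkg : k = g
    · subst hkg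
      rw [hg, hg, Function.update_of_ne (Ne.symm hij), hx]
      simp
    · obtain ⟨a, b, ha, hb, hab, hla, hlb⟩ := H k hk hkg
      have aux : ∀ f, Avail S G φ k f → ¬ IsLit i f →
          f (Function.update x i (!x i)) = f x := by
        intro f hf hlf
        rcases hf with ⟨c, hf⟩ | ⟨l, hl, e', hf⟩ | ⟨l, hl, hlk, e', hf⟩
        · rw [hf, hf]
        · have : l ≠ i := by
            rintro rfl
            exact hlf ⟨e', hf⟩
          rw [hf, hf, Function.update_of_ne this]
        · rw [hf, hf, ih l hlk hl x hx]
      rw [hab, hab, aux a ha hla, aux b hb hlb]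
  obtain ⟨k, hk, -, e', hke⟩ := par_is_gate hS h
  have h1 := hke (fun _ => e)
  have h2 := hke (Function.update (fun _ => e) i (!e))
  have h3 := par_flip S i hi (fun _ => e)
  have h4 := key k hk (fun _ => e) rfl
  rw [h3, h4, ← h1] at h2
  revert h2
  cases par S (fun _ => e) <;> cases t <;> simp

/-- Schnorr's lower bound in semantic form. -/
theorem lower_bound {n : ℕ} (s : ℕ) : ∀ (S : Finset (Fin n)) (G : Finset ℕ)
    (φ : ℕ → (Fin n → Bool) → Bool) (m : ℕ) (t : Bool), G.card = s → Valid S G φ →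
    Avail S G φ m (fun x => par S x ^^ t) → 3 * S.card ≤ s + 3 := by
  induction s using Nat.strong_induction_on with
  | _ s ih =>
  intro S G φ m t hs hV hT
  by_cases hS : S.card ≤ 1
  · omega
  replace hS : 2 ≤ S.card := by omega
  -- redundant gates can be removed
  by_cases hred : ∃ k ∈ G, Avail S G φ k (φ k)
  · obtain ⟨k, hk, hka⟩ := hred
    have hc := Finset.card_erase_add_one hk
    have := ih (G.erase k).card (by omega) S (G.erase k) φ m t rfl (hV.erase hka)
      (Avail.erase hka hT)
    omega
  push Not at hred
  -- the first gate
  have hGne : G.Nonempty := by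
    obtain ⟨j, hj, -⟩ := par_is_gate hS hT
    exact ⟨j, hj⟩
  obtain ⟨g, hg, hgmin⟩ : ∃ g ∈ G, ∀ k ∈ G, g ≤ k :=
    ⟨G.min' hGne, G.min'_mem hGne, fun k hk => G.min'_le k hk⟩
  obtain ⟨a, b, ha, hb, hab⟩ := hV g hg
  have lit : ∀ a b, Avail S G φ g a → Avail S G φ g b → (∀ x, φ g x = (a x && b x)) →
      ∃ i ∈ S, ∃ e : Bool, ∀ x, a x = (x i ^^ e) := by
    intro a b ha hb hab
    rcases ha with ⟨c, h⟩ | h | ⟨j, hj, hjm, -⟩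
    · exact absurd (hb.and_const c h hab) (hred g hg)
    · exact h
    · exact absurd (hgmin j hj) (by omega)
  obtain ⟨i, hi, e, hae⟩ := lit a b ha hb hab
  obtain ⟨j, hj, e', hbe⟩ := lit b a hb ha (fun x => by rw [hab, Bool.and_comm])
  have hij : i ≠ j := by
    rintro rfl
    apply hred g hg
    by_cases hee : e = e'
    · subst hee
      exact ha.congr fun x => by rw [hab, hae, hbe, Bool.and_self]
    · refine Or.inl ⟨false, fun x => ?_⟩
      rw [hab, hae, hbe]
      revert hee
      cases e <;> cases e' <;> cases x i <;> simp
  -- a second gate reading `x i`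
  obtain ⟨h, hh, hhg, b', hb', d, hhd⟩ : ∃ h ∈ G, h ≠ g ∧ ∃ b', Avail S G φ h b' ∧
      ∃ d : Bool, ∀ x, φ h x = ((x i ^^ d) && b' x) := by
    by_contra hcon
    push Not at hcon
    refine exists_second_reader hS hT g i j hi hij a e' (fun x => by rw [hab, hbe]) ?_
    intro k hk hkg
    obtain ⟨p, q, hp, hq, hpq⟩ := hV k hk
    refine ⟨p, q, hp, hq, hpq, ?_, ?_⟩
    · rintro ⟨d, hd⟩
      obtain ⟨x, hx⟩ := hcon k hk hkg q hq d
      exact hx (by rw [hpq, hd])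
    · rintro ⟨d, hd⟩
      obtain ⟨x, hx⟩ := hcon k hk hkg p hp d
      exact hx (by rw [hpq, hd, Bool.and_comm])
  -- restricting `x i := d` makes `h` constant
  have hconst : ∀ x, φ h (Function.update x i d) = false := by
    intro x
    rw [hhd]
    simp
  have hcE := Finset.card_erase_add_one hi
  have hch := Finset.card_erase_add_one hh
  -- a gate reading `h`
  by_cases hsucc : ∃ h' ∈ G, h' ≠ h ∧ h' ≠ g ∧ ∃ q, Avail S G φ h' q ∧
      ∃ u : Bool, ∀ x, φ h' x = ((φ h x ^^ u) && q x)
  · obtain ⟨h', hh', hh'h, hh'g, q, hq, u, hqu⟩ := hsucc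
    set φ' : ℕ → (Fin n → Bool) → Bool := fun k x => φ k (Function.update x i d) with hφ'
    have V0 := hV.restrict i d
    have T0 := hT.restrict i d
    have R1 : Avail (S.erase i) G φ' h (φ' h) := Or.inl ⟨false, hconst⟩
    have R2 : Avail (S.erase i) G φ' g (φ' g) :=
      (hb.restrict i d).and_const (a := fun x => a (Function.update x i d)) (d ^^ e)
        (fun x => by simp [hae]) (fun x => hab _)
    have R3 : Avail (S.erase i) G φ' h' (φ' h') :=
      (hq.restrict i d).and_const (a := fun x => φ h (Function.update x i d) ^^ u) u
        (fun x => by simp [hconst]) (fun x => hqu _)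
    have V1 := V0.erase R1
    have T1 := Avail.erase R1 T0
    have R2' := Avail.erase R1 R2
    have R3' := Avail.erase R1 R3
    have V2 := V1.erase R2'
    have T2 := Avail.erase R2' T1
    have R3'' := Avail.erase R2' R3'
    have V3 := V2.erase R3''
    have T3 := Avail.erase R3'' T2
    have c2 := Finset.card_erase_add_one (Finset.mem_erase.mpr ⟨hhg.symm, hg⟩ : g ∈ G.erase h)
    have c3 := Finset.card_erase_add_one (Finset.mem_erase.mpr ⟨hh'g,
      Finset.mem_erase.mpr ⟨hh'h, hh'⟩⟩ : h' ∈ (G.erase h).erase g)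
    have := ih _ (by omega) (S.erase i) (((G.erase h).erase g).erase h') φ' m (d ^^ t) rfl V3
      (T3.congr fun x => by
        rw [par_restrict S i hi]
        cases d <;> cases t <;> cases par (S.erase i) x <;> rfl)
    omega
  · -- otherwise `h` is useless
    push Not at hsucc
    have keep : ∀ k f, Avail S G φ k f → (¬ ∃ u : Bool, ∀ x, f x = (φ h x ^^ u)) →
        Avail S (G.erase h) φ k f := by
      intro k f hf hnf
      rcases hf with hf | hf | ⟨l, hl, hlk, u, hf⟩
      · exact Or.inl hf
      · exact Or.inr (Or.inl hf)
      · refine Or.inr (Or.inr ⟨l, ?_, hlk, u, hf⟩)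
        refine Finset.mem_erase.mpr ⟨?_, hl⟩
        rintro rfl
        exact hnf ⟨u, hf⟩
    have hV' : Valid S (G.erase h) φ := by
      intro k hk
      obtain ⟨hkh, hk⟩ := Finset.mem_erase.mp hk
      by_cases hkg : k = g
      · subst hkg
        exact ⟨a, b, Or.inr (Or.inl ⟨i, hi, e, hae⟩), Or.inr (Or.inl ⟨j, hj, e', hbe⟩), hab⟩
      · obtain ⟨p, q, hp, hq, hpq⟩ := hV k hk
        refine ⟨p, q, keep k p hp ?_, keep k q hq ?_, hpq⟩
        · rintro ⟨u, hu⟩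
          obtain ⟨x, hx⟩ := hsucc k hk hkh hkg q hq u
          exact hx (by rw [hpq, hu])
        · rintro ⟨u, hu⟩
          obtain ⟨x, hx⟩ := hsucc k hk hkh hkg p hp u
          exact hx (by rw [hpq, hu, Bool.and_comm])
    have hT' : Avail S (G.erase h) φ m (fun x => par S x ^^ t) := by
      refine keep m _ hT ?_
      rintro ⟨u, hu⟩
      have h1 := hu (Function.update (fun _ => d) i d)
      have h2 := hu (Function.update (Function.update (fun _ => d) j (!d)) i d)
      have h3 := par_flip (S.erase i) j (by simp [hj, hij.symm]) (fun _ => d)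
      rw [hconst, par_restrict S i hi] at h1 h2
      rw [h3, ← h1] at h2
      revert h2
      cases par (S.erase i) (fun _ => d) <;> cases t <;> cases d <;> simp
    have := ih _ (by omega) S (G.erase h) φ m t rfl hV' hT'
    omega

/-- Values of a list of gates. -/
def ev {n : ℕ} (L : List (Gate n)) (x : Fin n → Bool) : List Bool :=
  L.foldl (fun acc g => acc ++ [g.val x acc]) []

/-- Topological order. -/
def WF {n : ℕ} (L : List (Gate n)) : Prop :=
  ∀ (i : ℕ) (g : Gate n), L[i]? = some g → ∀ r ∈ g.refs, r < i

theorem ev_snoc {n : ℕ} (L : List (Gate n)) (g : Gate n) (x : Fin n → Bool) :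
    ev (L ++ [g]) x = ev L x ++ [g.val x (ev L x)] := by
  simp [ev]

theorem ev_length {n : ℕ} (L : List (Gate n)) (x : Fin n → Bool) :
    (ev L x).length = L.length := by
  induction L using List.reverseRecOn with
  | nil => rfl
  | append_singleton L g ih => simp [ev_snoc, ih]

theorem wf_snoc {n : ℕ} (L : List (Gate n)) (g : Gate n) :
    WF (L ++ [g]) ↔ WF L ∧ ∀ r ∈ g.refs, r < L.length := by
  constructor
  · intro h
    refine ⟨fun i g' hi => ?_, h L.length g (by simp)⟩
    refine h i g' ?_
    have hlt : i < L.length := (List.getElem?_eq_some_iff.mp hi).1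
    rw [List.getElem?_append_left hlt, hi]
  · rintro ⟨h1, h2⟩ i g' hi
    rcases lt_trichotomy i L.length with hlt | heq | hgt
    · rw [List.getElem?_append_left hlt] at hi
      exact h1 i g' hi
    · subst heq
      simp at hi
      subst hi
      exact h2
    · have : i < (L ++ [g]).length := (List.getElem?_eq_some_iff.mp hi).1
      simp at this
      omega

theorem val_append {n : ℕ} (g : Gate n) (x : Fin n → Bool) (l l' : List Bool)
    (h : ∀ r ∈ g.refs, r < l.length) : g.val x (l ++ l') = g.val x l := by
  cases g with
  | inp i => rfl
  | const b => rfl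
  | not a =>
    simp only [Gate.refs, List.mem_cons, List.not_mem_nil, or_false, forall_eq] at h
    simp only [Gate.val]
    rw [List.getD_append _ _ _ _ h]
  | and a b =>
    have ha := h a (by simp [Gate.refs])
    have hb := h b (by simp [Gate.refs])
    simp only [Gate.val]
    rw [List.getD_append _ _ _ _ ha, List.getD_append _ _ _ _ hb]
  | or a b =>
    have ha := h a (by simp [Gate.refs])
    have hb := h b (by simp [Gate.refs])
    simp only [Gate.val]
    rw [List.getD_append _ _ _ _ ha, List.getD_append _ _ _ _ hb]

theorem ev_spec {n : ℕ} (L : List (Gate n)) (hL : WF L) (x : Fin n → Bool) :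
    ∀ (k : ℕ) (g : Gate n), L[k]? = some g → (ev L x).getD k false = g.val x (ev L x) := by
  induction L using List.reverseRecOn with
  | nil => intro k g h; simp at h
  | append_singleton L g ih =>
    obtain ⟨h1, h2⟩ := (wf_snoc L g).mp hL
    intro k g' hk
    have hlt : k < (L ++ [g]).length := (List.getElem?_eq_some_iff.mp hk).1
    rw [ev_snoc, val_append]
    · rcases Nat.lt_or_ge k L.length with hlt | hge
      · rw [List.getElem?_append_left hlt] at hk
        rw [List.getD_append _ _ _ _ (by rw [ev_length]; exact hlt)]
        exact ih h1 k g' hk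
      · have : k = L.length := by simp at hlt; omega
        subst this
        simp at hk
        subst hk
        rw [List.getD_append_right _ _ _ _ (by rw [ev_length])]
        simp [ev_length]
    · intro r hr
      have := hL k g' hk r hr
      rw [ev_length]
      simp at hlt
      omega

/-- Indices of binary gates. -/
def bins {n : ℕ} (L : List (Gate n)) : Finset ℕ :=
  (Finset.range L.length).filter (fun k => ∃ g, L[k]? = some g ∧ g.costly = true)

theorem bins_card {n : ℕ} (L : List (Gate n)) :
    (bins L).card = (L.filter Gate.costly).length := by
  classical
  induction L using List.reverseRecOn with
  | nil => rfl
  | append_singleton L g ih =>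
    have h1 : (bins (L ++ [g])) =
        if g.costly = true then insert L.length (bins L) else bins L := by
      ext k
      rcases lt_trichotomy k L.length with hlt | heq | hgt
      · have hne : k ≠ L.length := by omega
        split_ifs <;> simp [bins, List.getElem?_append_left hlt, hlt, hne] <;> omega
      · subst heq
        split_ifs with hc <;> simp [bins, hc]
      · have hne : k ≠ L.length := by omega
        have h1 : ¬ k < L.length := by omega
        have h2 : ¬ k < L.length + 1 := by omega
        split_ifs <;> simp [bins, hne, h1, h2]
    have h2 : L.length ∉ bins L := by simp [bins]
    rw [h1]
    split_ifs with hc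
    · rw [Finset.card_insert_of_notMem h2, ih]
      simp [List.filter_append, hc]
    · rw [ih]
      simp [List.filter_append, hc]

theorem circuit_lower {n : ℕ} (C : Circuit n) (hC : C.Computes (XORf n)) :
    3 * (n - 1) ≤ C.size := by
  classical
  have hwf : WF C.gates := C.wf
  set L := C.gates with hLdef
  let isOr : ℕ → Bool := fun k => decide (∃ a b, L[k]? = some (Gate.or a b))
  let φ : ℕ → (Fin n → Bool) → Bool := fun k x => ((ev L x).getD k false ^^ isOr k)
  have memb : ∀ k g, L[k]? = some g → g.costly = true → k ∈ bins L := by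
    intro k g hk hg
    have hlt : k < L.length := (List.getElem?_eq_some_iff.mp hk).1
    simp only [bins, Finset.mem_filter, Finset.mem_range]
    exact ⟨hlt, g, hk, hg⟩
  have nodes : ∀ k, k < L.length →
      Avail Finset.univ (bins L) φ (k + 1) (fun x => (ev L x).getD k false) := by
    intro k
    induction k using Nat.strong_induction_on with
    | _ k ih =>
    intro hk
    obtain ⟨g, hg⟩ : ∃ g, L[k]? = some g := ⟨L[k], List.getElem?_eq_getElem hk⟩
    have hsp := fun x => ev_spec L hwf x k g hg
    have hself : g.costly = true → 
        Avail Finset.univ (bins L) φ (k + 1) (fun x => (ev L x).getD k false) := by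
      intro hc
      refine Or.inr (Or.inr ⟨k, memb k g hg hc, by omega, isOr k, fun x => ?_⟩)
      simp [φ]
    cases g with
    | inp i => exact Or.inr (Or.inl ⟨i, Finset.mem_univ _, false, fun x => by
        simp only [hsp]; simp [Gate.val]⟩)
    | const b => exact Or.inl ⟨b, fun x => by simp only [hsp]; simp [Gate.val]⟩
    | not a =>
      have hak := hwf k _ hg a (by simp [Gate.refs])
      refine ((ih a hak (by omega)).mono (by omega)).xor true fun x => ?_
      simp only [hsp]
      simp [Gate.val]
    | and a b => exact hself rfl
    | or a b => exact hself rfl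
  have hV : Valid Finset.univ (bins L) φ := by
    intro k hk
    simp only [bins, Finset.mem_filter, Finset.mem_range] at hk
    obtain ⟨hk, g, hg, hc⟩ := hk
    have hsp := fun x => ev_spec L hwf x k g hg
    cases g with
    | inp i => simp [Gate.costly] at hc
    | const b => simp [Gate.costly] at hc
    | not a => simp [Gate.costly] at hc
    | and a b =>
      have hak := hwf k _ hg a (by simp [Gate.refs])
      have hbk := hwf k _ hg b (by simp [Gate.refs])
      refine ⟨_, _, (nodes a (by omega)).mono (by omega), (nodes b (by omega)).mono (by omega),
        fun x => ?_⟩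
      have : isOr k = false := by simp [isOr, hg]
      simp only [φ, hsp, this]
      simp [Gate.val]
    | or a b =>
      have hak := hwf k _ hg a (by simp [Gate.refs])
      have hbk := hwf k _ hg b (by simp [Gate.refs])
      refine ⟨_, _, ((nodes a (by omega)).mono (by omega)).xor true (fun x => rfl),
        ((nodes b (by omega)).mono (by omega)).xor true (fun x => rfl), fun x => ?_⟩
      have : isOr k = true := by simp [isOr, hg]
      simp only [φ, hsp, this]
      simp [Gate.val]
  have hT := nodes C.output C.output.isLt
  have hT' : Avail Finset.univ (bins L) φ (C.output + 1)
      (fun x => par Finset.univ x ^^ false) := by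
    refine hT.congr fun x => ?_
    have : (ev L x).getD C.output false = XORf n x := hC x
    rw [this]
    simp [par, XORf]
  have := lower_bound _ Finset.univ (bins L) φ _ false rfl hV hT'
  rw [bins_card, Finset.card_univ, Fintype.card_fin] at this
  have hs : C.size = (L.filter Gate.costly).length := rfl
  omega

theorem upper {n : ℕ} (m : ℕ) (hm : m < n) : ∃ L : List (Gate n), WF L ∧
    (∃ o < L.length, ∀ x, (ev L x).getD o false =
      par (Finset.univ.filter (fun i : Fin n => i.val ≤ m)) x) ∧
    (L.filter Gate.costly).length = 3 * m := by
  induction m with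
  | zero =>
    refine ⟨[Gate.inp ⟨0, hm⟩], ?_, ⟨0, by simp, fun x => ?_⟩, rfl⟩
    · have := (wf_snoc [] (Gate.inp (⟨0, hm⟩ : Fin n))).mpr
        ⟨by intro i g h; simp at h, by simp [Gate.refs]⟩
      simpa using this
    · have : (Finset.univ.filter (fun i : Fin n => i.val ≤ 0)) = {⟨0, hm⟩} := by
        ext i
        simp [Fin.ext_iff]
      rw [this]
      rw [par_mem _ _ (Finset.mem_singleton_self _)]
      simp [par, ev, Gate.val]
  | succ m ih =>
    obtain ⟨L, hL, ⟨o, ho, hval⟩, hc⟩ := ih (by omega)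
    refine ⟨L ++ [Gate.inp ⟨m + 1, hm⟩] ++ [Gate.or o L.length] ++ [Gate.and o L.length] ++
      [Gate.not (L.length + 2)] ++ [Gate.and (L.length + 1) (L.length + 3)], ?_,
      ⟨L.length + 4, by simp, fun x => ?_⟩, ?_⟩
    · simp only [wf_snoc, Gate.refs]
      refine ⟨⟨⟨⟨⟨hL, ?_⟩, ?_⟩, ?_⟩, ?_⟩, ?_⟩ <;> simp <;> omega
    · have hi : (⟨m + 1, hm⟩ : Fin n) ∈
          (Finset.univ.filter (fun i : Fin n => i.val ≤ m + 1)) := by simp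
      have he : (Finset.univ.filter (fun i : Fin n => i.val ≤ m + 1)).erase ⟨m + 1, hm⟩ =
          (Finset.univ.filter (fun i : Fin n => i.val ≤ m)) := by
        ext i
        simp [Fin.ext_iff]
        omega
      rw [par_mem _ _ hi, he, ← hval]
      have hlen := ev_length L x
      simp only [ev_snoc, Gate.val]
      generalize ev L x = l at *
      rw [← hlen] at ho ⊢
      have e1 : ∀ (t : List Bool), (l ++ t).getD o false = l.getD o false :=
        fun t => List.getD_append _ _ _ _ ho
      have e2 : ∀ (t : List Bool) (r : ℕ), (l ++ t).getD (l.length + r) false = t.getD r false :=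
        fun t r => by rw [List.getD_append_right _ _ _ _ (by omega)]; simp
      have e3 : ∀ (t : List Bool), (l ++ t).getD (l.length) false = t.getD 0 false :=
        fun t => e2 t 0
      simp only [List.append_assoc, e1, e2, e3]
      simp only [List.cons_append, List.nil_append, List.getD_cons_zero, List.getD_cons_succ]
      cases l.getD o false <;> cases x ⟨m + 1, hm⟩ <;> rfl
    · simp only [List.filter_append, List.length_append, hc]
      simp only [List.filter_cons, List.filter_nil, Gate.costly]
      simp
      omega

end SchnorrProof

/-- Tightness of Schnorr's bound: for every `n ≥ 1` there is a DeMorgan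
circuit with exactly `3(n-1)` binary gates computing `XOR_n`; hence
`CC(XOR_n) = 3(n-1)`. -/
theorem schnorr_tight :
    ∀ n : ℕ, 1 ≤ n →
      (∃ C : Circuit n, C.Computes (XORf n) ∧ C.size = 3 * (n - 1)) ∧
      CC n (XORf n) = 3 * (n - 1) := by
  intro n hn
  have hex : ∃ C : Circuit n, C.Computes (XORf n) ∧ C.size = 3 * (n - 1) := by
    obtain ⟨L, hL, ⟨o, ho, hval⟩, hc⟩ := SchnorrProof.upper (n := n) (n - 1) (by omega)
    refine ⟨⟨L, ⟨o, ho⟩, hL⟩, fun x => ?_, hc⟩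
    have h1 := hval x
    have h2 : (Finset.univ.filter (fun i : Fin n => i.val ≤ n - 1)) = Finset.univ := by
      ext i
      simp
      omega
    rw [h2] at h1
    exact h1
  refine ⟨hex, le_antisymm (Nat.sInf_le hex) ?_⟩
  refine le_csInf ⟨_, hex⟩ ?_
  rintro s ⟨C, hC, rfl⟩
  exact SchnorrProof.circuit_lower C hC
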